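/- Let Y be a Banach space and f : X → Y μ-measurable with ‖f‖ μ-integrable on X, and fix ε > 0. Given λ ≥ 1 and any μ-a.e. λ-Morse cover 𝒮 of X, there is a gauge function δ : X → (0,1] such that for every finite or countably infinite sequence ⟨S_i(x_i)⟩ of δ-fine sets from 𝒮 that is μ-exhausting of X, the simple-type function Σ_i f(x_i)·χ_{S_i} approximates f in the sense that ∫_X ‖f(y) − Σ_i f(x_i)χ_{S_i}(y)‖ dμ(y) < ε, and moreover the absolute sum of local errors is small: Σ_i ‖∫_{S_i} f dμ − f(x_i)·μ(S_i)‖ < ε, where ∫_{S_i} f dμ denotes the Bochner integral of f over S_i. -/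

import Mathlib

open MeasureTheory Set Metric Filter

/-- `S` is a `λ`-Morse set with tag `a`: for some `r > 0`, `B(a,r) ⊆ S ⊆ B(a,λr)`
(closed balls) and `S` is starlike with respect to `B(a,r)`. -/
def IsMorseSet {X : Type*} [NormedAddCommGroup X] [NormedSpace ℝ X]
    (lam : ℝ) (a : X) (S : Set X) : Prop :=
  ∃ r > (0:ℝ), Metric.closedBall a r ⊆ S ∧ S ⊆ Metric.closedBall a (lam * r) ∧
    ∀ y ∈ Metric.closedBall a r, ∀ x ∈ S, segment ℝ y x ⊆ S

/-- `𝒮` (a collection of tagged sets) is a fine, measurable, `λ`-Morse cover of `Ω`: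
every member is a measurable λ-Morse subset of `Ω` with the indicated tag, and every point
of `Ω` is the tag of sets of `𝒮` of arbitrarily small diameter. -/
def IsFineMorseCover {X : Type*} [NormedAddCommGroup X] [NormedSpace ℝ X] [MeasurableSpace X]
    (lam : ℝ) (Ω : Set X) (𝒮 : Set (X × Set X)) : Prop :=
  (∀ p ∈ 𝒮, IsMorseSet lam p.1 p.2 ∧ MeasurableSet p.2 ∧ p.2 ⊆ Ω) ∧
  ∀ a ∈ Ω, ∀ ε > (0:ℝ), ∃ S : Set X, (a, S) ∈ 𝒮 ∧ Metric.diam S < ε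

/-- The (finite or countably infinite) sequence of tagged sets `T` indexed by `I ⊆ ℕ`
is `μ`-exhausting of `Ω` within the collection `𝒮`: its members belong to `𝒮`,
are pairwise disjoint, and cover all but a `μ`-null subset of `Ω`. -/
def IsExhausting {X : Type*} [MeasurableSpace X] (μ : Measure X) (Ω : Set X)
    (𝒮 : Set (X × Set X)) (I : Set ℕ) (T : ℕ → X × Set X) : Prop :=
  (∀ i ∈ I, T i ∈ 𝒮) ∧
  (∀ i ∈ I, ∀ j ∈ I, i ≠ j → Disjoint (T i).2 (T j).2) ∧
  μ (Ω \ ⋃ i ∈ I, (T i).2) = 0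

/-- `𝒮` is a `μ`-a.e. `λ`-Morse cover of `Ω`: it is a fine measurable λ-Morse cover and,
for every nonempty open `U ⊆ Ω` and every gauge `δ : U → (0,1]`, there is a sequence of
`δ`-fine sets from `𝒮`, each contained in `U`, that is `μ`-exhausting of `U`. -/
def IsAEMorseCover {X : Type*} [NormedAddCommGroup X] [NormedSpace ℝ X] [MeasurableSpace X]
    (μ : Measure X) (lam : ℝ) (Ω : Set X) (𝒮 : Set (X × Set X)) : Prop :=
  IsFineMorseCover lam Ω 𝒮 ∧
  ∀ U : Set X, IsOpen U → U.Nonempty → U ⊆ Ω →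
    ∀ δ : X → ℝ, (∀ x ∈ U, δ x ∈ Set.Ioc (0:ℝ) 1) →
      ∃ I T, IsExhausting μ U 𝒮 I T ∧
        ∀ i ∈ I, (T i).2 ⊆ U ∧ (T i).2 ⊆ Metric.closedBall (T i).1 (δ (T i).1)

/-- `f` is `μ`-measurable: there is a sequence of simple functions converging to `f`
`μ`-almost everywhere. -/
def MuMeasurable {X Y : Type*} [MeasurableSpace X] [NormedAddCommGroup Y]
    (μ : Measure X) (f : X → Y) : Prop :=
  ∃ F : ℕ → MeasureTheory.SimpleFunc X Y,
    ∀ᵐ x ∂μ, Filter.Tendsto (fun n => F n x) Filter.atTop (nhds (f x))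

/-- `a` is a point of approximate continuity of `f` (relative to the tagged collection
`𝒮`): for all `ε, η > 0` there is `R > 0` such that every `S ∈ 𝒮` with tag `a` contained
in `B(a,R)` satisfies `μ {x ∈ S | ‖f a - f x‖ > η} ≤ ε · μ S`. -/
def IsApproxContPt {X Y : Type*} [NormedAddCommGroup X] [MeasurableSpace X]
    [NormedAddCommGroup Y] (μ : Measure X) (𝒮 : Set (X × Set X)) (f : X → Y) (a : X) : Prop :=
  ∀ ε > (0:ℝ), ∀ η > (0:ℝ), ∃ R > (0:ℝ), ∀ S : Set X, (a, S) ∈ 𝒮 →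
    S ⊆ Metric.closedBall a R →
    μ {x ∈ S | η < ‖f a - f x‖} ≤ ENNReal.ofReal ε * μ S

/-- `a` is a Lebesgue point of `g` with respect to the value `c` (relative to the tagged
collection `𝒮`): for every `ε > 0` there is `R > 0` such that every `S ∈ 𝒮` with tag `a`
contained in `B(a,R)` satisfies `∫_S ‖g x - c‖ dμ ≤ ε · μ S`. -/
def IsLebesguePt {X Y : Type*} [NormedAddCommGroup X] [MeasurableSpace X]
    [NormedAddCommGroup Y] (μ : Measure X) (𝒮 : Set (X × Set X)) (g : X → Y) (a : X)
    (c : Y) : Prop :=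
  ∀ ε > (0:ℝ), ∃ R > (0:ℝ), ∀ S : Set X, (a, S) ∈ 𝒮 → S ⊆ Metric.closedBall a R →
    ∫⁻ x in S, ‖g x - c‖₊ ∂μ ≤ ENNReal.ofReal ε * μ S

/-- Core estimate for Borel measures: a lower semicontinuous control function. -/
theorem morse_core {X Y : Type*} [NormedAddCommGroup X] [NormedSpace ℝ X] [FiniteDimensional ℝ X]
    [MeasurableSpace X] [BorelSpace X] [NormedAddCommGroup Y] [NormedSpace ℝ Y]
    (ν : Measure X) [ν.Regular] (f : X → Y) (hf : Integrable f ν) (ε : ENNReal) (hε : ε ≠ 0) :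
    ∃ v : X → ENNReal, Measurable v ∧ LowerSemicontinuous v ∧ (∫⁻ y, v y ∂ν ≤ ε) ∧
      ∀ x, ∀ᶠ y in nhds x, ‖f y - f x‖ₑ ≤ 2 * v y := by
  have : ProperSpace X := FiniteDimensional.proper_real X
  have h2 : ε / 2 ≠ 0 := (ENNReal.half_pos hε).ne'
  obtain ⟨g, -, hg, gc, gi⟩ := hf.exists_hasCompactSupport_lintegral_sub_le h2
  obtain ⟨v, hv, vl, vi⟩ := exists_lt_lowerSemicontinuous_lintegral_ge_of_aemeasurable ν
    (fun x => ‖f x - g x‖₊) (hf.sub gi).aestronglyMeasurable.nnnorm.aemeasurable h2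
  refine ⟨v, vl.measurable, vl, ?_, ?_⟩
  · calc _ ≤ _ := vi
      _ ≤ ε / 2 + ε / 2 := by
        gcongr
        exact hg
      _ = ε := ENNReal.add_halves ε
  · intro x
    obtain ⟨c, hc1, hc2⟩ := exists_between (hv x)
    have h1 := vl x c hc2
    have hcont : Continuous (fun y => ‖f x - g x‖ₑ + ‖g x - g y‖ₑ) := by fun_prop
    have h3 : ∀ᶠ y in nhds x, ‖f x - g x‖ₑ + ‖g x - g y‖ₑ < c := by
      apply hcont.continuousAt.eventually_lt_const
      simpa only [sub_self, enorm_zero, add_zero] using! hc1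
    filter_upwards [h1, h3] with y hy1 hy3
    have e : f y - f x = (f y - g y) - ((f x - g x) + (g x - g y)) := by abel
    rw [e, two_mul]
    refine (enorm_sub_le).trans (add_le_add (hv y).le ?_)
    exact (enorm_add_le _ _).trans (hy3.trans hy1).le

section Transfer

variable {X Y : Type*} [NormedAddCommGroup X] [NormedSpace ℝ X] [FiniteDimensional ℝ X]
    [m : MeasurableSpace X] [OpensMeasurableSpace X]
    [NormedAddCommGroup Y] [NormedSpace ℝ Y]

theorem trim_apply_all (μ : Measure X) [μ.OuterRegular] (hm : borel X ≤ m) (A : Set X) :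
    μ.trim hm A = μ A := by
  apply le_antisymm
  · refine le_of_forall_gt fun r hr => ?_
    obtain ⟨U, hAU, hU, hlt⟩ := A.exists_isOpen_lt_of_lt r hr
    refine lt_of_le_of_lt (measure_mono hAU) ?_
    rwa [trim_measurableSet_eq hm (MeasurableSpace.measurableSet_generateFrom hU)]
  · exact le_trim hm

theorem trim_regular (μ : Measure X) [μ.Regular] (hm : borel X ≤ m) :
    @Measure.Regular X (borel X) _ (μ.trim hm) := by
  refine @Measure.Regular.mk X (borel X) _ _ ?_ ?_ ?_
  · refine @IsFiniteMeasureOnCompacts.mk X (borel X) _ _ fun K hK => ?_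
    rw [trim_apply_all]
    exact hK.measure_lt_top
  · refine @Measure.OuterRegular.mk X (borel X) _ _ fun A _ r hr => ?_
    rw [trim_apply_all] at hr
    obtain ⟨U, hAU, hU, hlt⟩ := A.exists_isOpen_lt_of_lt r hr
    exact ⟨U, hAU, hU, by rwa [trim_apply_all]⟩
  · intro U hU r hr
    rw [trim_apply_all] at hr
    obtain ⟨K, hKU, hK, hlt⟩ := Measure.Regular.innerRegular (μ := μ) hU r hr
    exact ⟨K, hKU, hK, by rwa [trim_apply_all]⟩

theorem nullMeas_trim (μ : Measure X) [μ.Regular] (hm : borel X ≤ m) (A : Set X)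
    (hA : MeasurableSet A) : @NullMeasurableSet X (borel X) A (μ.trim hm) := by
  have : ProperSpace X := FiniteDimensional.proper_real X
  have key : ∀ B : Set X, MeasurableSet B → μ B ≠ ⊤ →
      @NullMeasurableSet X (borel X) B (μ.trim hm) := by
    intro B hB hfin
    set C := @toMeasurable X (borel X) (μ.trim hm) B with hC
    have hCm : MeasurableSet[borel X] C := @measurableSet_toMeasurable X (borel X) _ _
    have hsub : B ⊆ C := @subset_toMeasurable X (borel X) _ _
    have hCe : μ C = μ B := by
      rw [← trim_apply_all μ hm C, ← trim_apply_all μ hm B]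
      exact @measure_toMeasurable X (borel X) (μ.trim hm) B
    have hd : μ (C \ B) = 0 := by
      rw [measure_sdiff hsub hB.nullMeasurableSet hfin, hCe, tsub_self]
    refine @NullMeasurableSet.congr X (borel X) _ C B
      (@MeasurableSet.nullMeasurableSet X (borel X) _ _ hCm) ?_
    refine @Filter.EventuallyLE.antisymm _ _ _ _ _ _ ?_ ?_
    · rw [@ae_le_set, trim_apply_all]; exact hd
    · exact Filter.Eventually.of_forall fun x hx => hsub hx
  have : A = ⋃ n : ℕ, A ∩ closedBall 0 n := by
    rw [← inter_iUnion, iUnion_closedBall_nat, inter_univ]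
  rw [this]
  refine NullMeasurableSet.iUnion fun n => key _ ?_ ?_
  · exact hA.inter isClosed_closedBall.measurableSet
  · exact ne_top_of_le_ne_top (isCompact_closedBall (0 : X) n).measure_lt_top.ne
      (measure_mono inter_subset_right)

theorem simple_aesm (μ : Measure X) [μ.Regular] (hm : borel X ≤ m) (F : SimpleFunc X Y) :
    @AEStronglyMeasurable X Y _ (borel X) (borel X) F (μ.trim hm) := by
  induction F using SimpleFunc.induction with
  | const c hs =>
    rename_i s
    have h := AEStronglyMeasurable.indicator₀ (μ := μ.trim hm) (s := s)
      (@aestronglyMeasurable_const X Y _ (borel X) (borel X) (μ.trim hm) c) (nullMeas_trim μ hm s hs)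
    convert h using 1
    ext x
    simp [SimpleFunc.coe_piecewise, Set.piecewise, Set.indicator]
  | add _ hf hg =>
    exact AEStronglyMeasurable.add hf hg

theorem morse_control (μ : Measure X) [μ.Regular] (f : X → Y) (hf : MuMeasurable μ f)
    (hfi : Integrable f μ) (ε : ENNReal) (hε : ε ≠ 0) :
    ∃ v : X → ENNReal, LowerSemicontinuous v ∧ (∫⁻ y, v y ∂μ ≤ ε) ∧
      ∀ x, ∀ᶠ y in nhds x, ‖f y - f x‖ₑ ≤ 2 * v y := by
  have hm : borel X ≤ m := OpensMeasurableSpace.borel_le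
  obtain ⟨F, hF⟩ := hf
  have hF' : ∀ᵐ x ∂(μ.trim hm), Tendsto (fun n => F n x) atTop (nhds (f x)) := by
    rw [ae_iff] at hF ⊢
    rw [trim_apply_all]; exact hF
  have hsm : @AEStronglyMeasurable X Y _ (borel X) (borel X) f (μ.trim hm) :=
    aestronglyMeasurable_of_tendsto_ae (μ := μ.trim hm) atTop
      (fun n => simple_aesm μ hm (F n)) hF'
  obtain ⟨f', hf', hff'⟩ := hsm
  have h1 : f =ᵐ[μ] f' := ae_eq_of_ae_eq_trim hff'
  have h2 : Integrable f' (μ.trim hm) := (hfi.congr h1).trim hm hf'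
  have h3 : Integrable f (μ.trim hm) :=
    Integrable.congr h2 hff'.symm
  obtain ⟨v, vm, vl, vi, hv⟩ := @morse_core X Y _ _ _ (borel X) (@BorelSpace.mk X _ (borel X) rfl) _ _ (μ.trim hm)
    (trim_regular μ hm) f h3 ε hε
  refine ⟨v, vl, ?_, hv⟩
  rwa [lintegral_trim hm vm] at vi

end Transfer

/-- Let `Y` be a Banach space and `f : X → Y` `μ`-measurable with `‖f‖` `μ`-integrable,
and fix `ε > 0`.  Given `λ ≥ 1` and any `μ`-a.e. `λ`-Morse cover `𝒮` of `X`, there is a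
gauge `δ : X → (0,1]` such that for every finite or countably infinite sequence
`⟨S_i(x_i)⟩` of `δ`-fine sets from `𝒮` that is `μ`-exhausting of `X`, the function
`Σ_i f(x_i)·χ_{S_i}` approximates `f` in the sense that
`∫_X ‖f(y) − Σ_i f(x_i)χ_{S_i}(y)‖ dμ(y) < ε`, and the absolute sum of local errors is
small: `Σ_i ‖∫_{S_i} f dμ − f(x_i)·μ(S_i)‖ < ε`. -/
theorem bochner_integral_morse_approx
    {X Y : Type*} [NormedAddCommGroup X] [NormedSpace ℝ X] [FiniteDimensional ℝ X]
    [MeasurableSpace X] [OpensMeasurableSpace X]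
    [NormedAddCommGroup Y] [NormedSpace ℝ Y] [CompleteSpace Y]
    (μ : Measure X) [μ.Regular] [μ.IsComplete]
    (f : X → Y) (hf : MuMeasurable μ f)
    (hint : Integrable (fun x => ‖f x‖) μ)
    (ε : ℝ) (hε : 0 < ε)
    (lam : ℝ) (hlam : 1 ≤ lam)
    (𝒮 : Set (X × Set X)) (h𝒮 : IsAEMorseCover μ lam Set.univ 𝒮) :
    ∃ δ : X → ℝ, (∀ x : X, δ x ∈ Set.Ioc (0:ℝ) 1) ∧
      ∀ (I : Set ℕ) (T : ℕ → X × Set X),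
        IsExhausting μ Set.univ 𝒮 I T →
        (∀ i ∈ I, (T i).2 ⊆ Metric.closedBall (T i).1 (δ (T i).1)) →
        (∫⁻ y, ‖f y - ∑' i : I, Set.indicator (T i).2 (fun _ => f (T i).1) y‖₊ ∂μ)
            < ENNReal.ofReal ε ∧
        (∑' i : I, (‖(∫ y in (T i).2, f y ∂μ) - (μ (T i).2).toReal • f (T i).1‖₊ : ENNReal))
            < ENNReal.ofReal ε := by
  obtain ⟨F, hF⟩ := id hf
  have hfi : Integrable f μ := by
    refine (integrable_norm_iff ?_).1 hint
    exact aestronglyMeasurable_of_tendsto_ae atTop (fun n => (F n).aestronglyMeasurable) hF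
  have : ProperSpace X := FiniteDimensional.proper_real X
  have hε4 : ENNReal.ofReal (ε / 4) ≠ 0 := by simpa using by linarith
  obtain ⟨v, vl, vi, hv⟩ := morse_control μ f hf hfi (ENNReal.ofReal (ε / 4)) hε4
  have hvm : Measurable v := vl.measurable
  have hw : ∫⁻ y, 2 * v y ∂μ < ENNReal.ofReal ε := by
    rw [lintegral_const_mul _ hvm]
    calc 2 * ∫⁻ y, v y ∂μ ≤ ENNReal.ofReal 2 * ENNReal.ofReal (ε / 4) := by
          rw [ENNReal.ofReal_ofNat]; gcongr
      _ = ENNReal.ofReal (2 * (ε / 4)) := (ENNReal.ofReal_mul (by norm_num)).symm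
      _ < ENNReal.ofReal ε := (ENNReal.ofReal_lt_ofReal_iff hε).2 (by linarith)
  have hδ : ∀ x, ∃ d : ℝ, d ∈ Ioc (0:ℝ) 1 ∧ ∀ y ∈ closedBall x d, ‖f y - f x‖ₑ ≤ 2 * v y := by
    intro x
    obtain ⟨d, hd, h⟩ := Metric.nhds_basis_closedBall.eventually_iff.1 (hv x)
    refine ⟨min d 1, ⟨lt_min hd one_pos, min_le_right _ _⟩, fun y hy => h ?_⟩
    exact closedBall_subset_closedBall (min_le_left _ _) hy
  choose δ hδ1 hδ2 using hδ
  refine ⟨δ, hδ1, fun I T hT hfine => ?_⟩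
  obtain ⟨hTS, hdisj, hnull⟩ := hT
  have hbound : ∀ i ∈ I, ∀ y ∈ (T i).2, ‖f y - f (T i).1‖ₑ ≤ 2 * v y :=
    fun i hi y hy => hδ2 _ y (hfine i hi hy)
  have hmeas : ∀ i ∈ I, MeasurableSet (T i).2 := fun i hi => (h𝒮.1.1 _ (hTS i hi)).2.1
  constructor
  · refine lt_of_le_of_lt (lintegral_mono_ae ?_) hw
    have hae : ∀ᵐ y ∂μ, y ∈ ⋃ i ∈ I, (T i).2 := by
      rw [ae_iff]
      convert hnull using 2
      ext y; simp
    filter_upwards [hae] with y hy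
    simp only [mem_iUnion, exists_prop] at hy
    obtain ⟨i, hi, hyi⟩ := hy
    rw [tsum_eq_single (⟨i, hi⟩ : I)]
    · simp only [indicator_of_mem hyi]
      exact hbound i hi y hyi
    · rintro ⟨j, hj⟩ hne
      apply indicator_of_notMem
      intro hyj
      have hji : j ≠ i := fun h => hne (Subtype.ext h)
      exact Set.disjoint_left.1 (hdisj j hj i hi hji) hyj hyi
  · refine lt_of_le_of_lt ?_ hw
    calc _ ≤ ∑' i : I, ∫⁻ y in (T i).2, 2 * v y ∂μ := by
          refine ENNReal.tsum_le_tsum fun i => ?_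
          have hfin : μ (T i).2 ≠ ⊤ := ne_top_of_le_ne_top
            (isCompact_closedBall (T i).1 (δ (T i).1)).measure_lt_top.ne
            (measure_mono (hfine i i.2))
          have hc : ∫ y in (T i).2, f (T i).1 ∂μ = (μ (T i).2).toReal • f (T i).1 := by
            rw [setIntegral_const]; rfl
          rw [← hc, ← integral_sub hfi.integrableOn (integrableOn_const hfin)]
          refine (enorm_integral_le_lintegral_enorm _).trans ?_
          exact setLIntegral_mono' (hmeas i i.2) fun y hy => hbound i i.2 y hy
      _ = ∫⁻ y in ⋃ i : I, (T i).2, 2 * v y ∂μ := by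
          rw [lintegral_iUnion (fun i : I => hmeas i i.2)]
          intro i j hij
          exact hdisj i i.2 j j.2 fun h => hij (Subtype.ext h)
      _ ≤ ∫⁻ y, 2 * v y ∂μ := setLIntegral_le_lintegral _ _
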